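/- Let a : [t₀,∞) → (0,∞) be a C¹ function satisfying the differential inequality a'(t) ≥ -ρ₂ exp(-1/(4ρ₁² a(t)²)) for constants ρ₁, ρ₂ > 0. Then a(t) ≥ 1/(3ρ₁ √(ln t)) for all sufficiently large t. -/

import Mathlib

open MeasureTheory Filter Topology

/-!
Put `κ = 1 / (4 * ρ₁ ^ 2)` and `y = κ / a ^ 2`. The differential inequality for `a` becomes
`y' ≤ C * y ^ (3 / 2) * exp (-y)`. The power of `y` costs only an arbitrarily small part of the
exponential, so `y' ≤ C' * exp (-μ * y)` for every `μ < 1`. Hence `exp (μ * y)` grows at most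
linearly, that is, `y ≤ c * log t` eventually for every `c > 1`. Solving for `a` gives every
constant larger than `2` in place of `3`.
-/

theorem pow_le_mul_exp_mul_sq {b : ℝ} (hb : 0 < b) (n : ℕ) (z : ℝ) :
    z ^ n ≤ (1 + n.factorial / b ^ n) * Real.exp (b * z ^ 2) := by
  have hbz : 0 ≤ b * z ^ 2 := by positivity
  have h_even : z ^ (2 * n) ≤ n.factorial / b ^ n * Real.exp (b * z ^ 2) := by
    calc z ^ (2 * n) = n.factorial / b ^ n * ((b * z ^ 2) ^ n / n.factorial) := by
          rw [mul_pow, ← pow_mul]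
          field_simp
      _ ≤ n.factorial / b ^ n * Real.exp (b * z ^ 2) := by
          gcongr
          exact Real.pow_div_factorial_le_exp _ hbz n
  calc z ^ n ≤ 1 + z ^ (2 * n) := by
        rw [mul_comm, pow_mul]
        nlinarith [sq_nonneg (z ^ n - 1)]
    _ ≤ Real.exp (b * z ^ 2) + n.factorial / b ^ n * Real.exp (b * z ^ 2) :=
        add_le_add (Real.one_le_exp hbz) h_even
    _ = (1 + n.factorial / b ^ n) * Real.exp (b * z ^ 2) := by ring

theorem eventually_mul_add_le_rpow {s : ℝ} (hs : 1 < s) (K D : ℝ) :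
    ∀ᶠ t : ℝ in atTop, K * t + D ≤ t ^ s := by
  have h_tendsto : Tendsto (fun t : ℝ => t ^ (s - 1)) atTop atTop :=
    tendsto_rpow_atTop (sub_pos.2 hs)
  filter_upwards [eventually_ge_atTop 1, h_tendsto.eventually_ge_atTop (K + |D|)] with t ht h_rpow
  have ht_pos : 0 < t := zero_lt_one.trans_le ht
  calc K * t + D ≤ K * t + |D| * t := by
        gcongr
        exact (le_abs_self D).trans (le_mul_of_one_le_right (abs_nonneg D) ht)
    _ = (K + |D|) * t := by ring
    _ ≤ t ^ (s - 1) * t := by gcongr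
    _ = t ^ s := by rw [← Real.rpow_add_one ht_pos.ne', sub_add_cancel]

section ExpNeg

variable {y y' : ℝ → ℝ} {t₀ C μ : ℝ}

theorem exp_mul_le_of_deriv_le_mul_exp_neg (hμ : 0 ≤ μ)
    (hderiv : ∀ t ≥ t₀, HasDerivAt y (y' t) t)
    (hle : ∀ t ≥ t₀, y' t ≤ C * Real.exp (-(μ * y t))) {t : ℝ} (ht : t₀ ≤ t) :
    Real.exp (μ * y t) ≤ Real.exp (μ * y t₀) + μ * C * (t - t₀) := by
  have h_exp_deriv : ∀ s ≥ t₀,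
      HasDerivAt (fun r => Real.exp (μ * y r)) (Real.exp (μ * y s) * (μ * y' s)) s :=
    fun s hs => ((hderiv s hs).const_mul μ).exp
  have h_exp_deriv_le : ∀ s ≥ t₀, Real.exp (μ * y s) * (μ * y' s) ≤ μ * C := fun s hs =>
    calc Real.exp (μ * y s) * (μ * y' s)
        ≤ Real.exp (μ * y s) * (μ * (C * Real.exp (-(μ * y s)))) := by
          gcongr
          exact hle s hs
      _ = μ * C := by
          rw [Real.exp_neg]
          field_simp
  have h_mean := (convex_Ici t₀).image_sub_le_mul_sub_of_deriv_le
    (fun s hs => (h_exp_deriv s hs).continuousAt.continuousWithinAt)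
    (fun s hs => (h_exp_deriv s (interior_subset hs)).differentiableAt.differentiableWithinAt)
    (fun s hs => (h_exp_deriv s (interior_subset hs)).deriv.trans_le
      (h_exp_deriv_le s (interior_subset hs)))
    t₀ Set.self_mem_Ici t ht ht
  linarith

theorem eventually_mul_le_mul_log_of_deriv_le_mul_exp_neg (hμ : 0 ≤ μ) {c : ℝ} (hc : 1 < c)
    (hderiv : ∀ t ≥ t₀, HasDerivAt y (y' t) t)
    (hle : ∀ t ≥ t₀, y' t ≤ C * Real.exp (-(μ * y t))) :
    ∀ᶠ t in atTop, μ * y t ≤ c * Real.log t := by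
  filter_upwards [eventually_ge_atTop t₀, eventually_gt_atTop 0,
    eventually_mul_add_le_rpow hc (μ * C) (Real.exp (μ * y t₀) - μ * C * t₀)]
    with t ht ht_pos h_rpow
  refine Real.exp_le_exp.1 ?_
  calc Real.exp (μ * y t) ≤ Real.exp (μ * y t₀) + μ * C * (t - t₀) :=
        exp_mul_le_of_deriv_le_mul_exp_neg hμ hderiv hle ht
    _ = μ * C * t + (Real.exp (μ * y t₀) - μ * C * t₀) := by ring
    _ ≤ t ^ c := h_rpow
    _ = Real.exp (c * Real.log t) := by rw [Real.rpow_def_of_pos ht_pos, mul_comm]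

end ExpNeg

section ExpNegInvSq

variable {κ C : ℝ}

theorem hasDerivAt_const_div_sq {a : ℝ → ℝ} {v t : ℝ} (ha : HasDerivAt a v t) (h₀ : a t ≠ 0) :
    HasDerivAt (fun s => κ / a s ^ 2) (2 * κ * (1 / a t) ^ 3 * -v) t := by
  refine (((ha.fun_pow 2).fun_inv (pow_ne_zero 2 h₀)).const_mul κ).congr_deriv ?_
  field_simp
  norm_num
  ring

theorem two_mul_one_div_cube_mul_neg_le_mul_exp_neg (hκ : 0 < κ) {μ x v : ℝ} (hμ : μ < 1)
    (hx : 0 < x) (hv : -C * Real.exp (-κ / x ^ 2) ≤ v) :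
    2 * κ * (1 / x) ^ 3 * -v ≤
      2 * κ * (1 + Nat.factorial 3 / ((1 - μ) * κ) ^ 3) * |C| * Real.exp (-(μ * (κ / x ^ 2))) := by
  have hb : 0 < (1 - μ) * κ := mul_pos (sub_pos.2 hμ) hκ
  have h_neg_v : -v ≤ |C| * Real.exp (-κ / x ^ 2) := by
    have h_abs := mul_le_mul_of_nonneg_right (le_abs_self C) (Real.exp_pos (-κ / x ^ 2)).le
    linarith
  calc 2 * κ * (1 / x) ^ 3 * -v
      ≤ 2 * κ * (1 / x) ^ 3 * (|C| * Real.exp (-κ / x ^ 2)) := by gcongr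
    _ ≤ 2 * κ * ((1 + Nat.factorial 3 / ((1 - μ) * κ) ^ 3) *
          Real.exp ((1 - μ) * κ * (1 / x) ^ 2)) * (|C| * Real.exp (-κ / x ^ 2)) := by
        gcongr
        exact pow_le_mul_exp_mul_sq hb 3 (1 / x)
    _ = 2 * κ * (1 + Nat.factorial 3 / ((1 - μ) * κ) ^ 3) * |C| *
          (Real.exp ((1 - μ) * κ * (1 / x) ^ 2) * Real.exp (-κ / x ^ 2)) := by ring
    _ = 2 * κ * (1 + Nat.factorial 3 / ((1 - μ) * κ) ^ 3) * |C| *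
          Real.exp (-(μ * (κ / x ^ 2))) := by
        rw [← Real.exp_add]
        ring_nf

theorem eventually_div_sq_le_mul_log (hκ : 0 < κ) {c : ℝ} (hc : 1 < c) {a a' : ℝ → ℝ} {t₀ : ℝ}
    (hpos : ∀ t ≥ t₀, 0 < a t) (hderiv : ∀ t ≥ t₀, HasDerivAt a (a' t) t)
    (hineq : ∀ t ≥ t₀, -C * Real.exp (-κ / a t ^ 2) ≤ a' t) :
    ∀ᶠ t in atTop, κ / a t ^ 2 ≤ c * Real.log t := by
  have h_sqrt : 1 < √c := (Real.lt_sqrt zero_le_one).2 (by rwa [one_pow])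
  have h_sqrt_pos : 0 < √c := zero_lt_one.trans h_sqrt
  have h_event := eventually_mul_le_mul_log_of_deriv_le_mul_exp_neg
    (inv_nonneg.2 h_sqrt_pos.le) h_sqrt
    (fun t ht => hasDerivAt_const_div_sq (κ := κ) (hderiv t ht) (hpos t ht).ne')
    (fun t ht => two_mul_one_div_cube_mul_neg_le_mul_exp_neg hκ
      (inv_lt_one_of_one_lt₀ h_sqrt) (hpos t ht) (hineq t ht))
  filter_upwards [h_event] with t ht
  calc κ / a t ^ 2 ≤ √c * (√c * Real.log t) := (inv_mul_le_iff₀ h_sqrt_pos).1 ht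
    _ = c * Real.log t := by rw [← mul_assoc, Real.mul_self_sqrt (zero_lt_one.trans hc).le]

end ExpNegInvSq

theorem one_div_mul_sqrt_le_of_one_div_sq_le {k ρ x L : ℝ} (hk : 0 < k) (hρ : 0 < ρ) (hx : 0 < x)
    (hL : 0 < L) (h : 1 / (4 * ρ ^ 2) / x ^ 2 ≤ k ^ 2 / 4 * L) : 1 / (k * ρ * √L) ≤ x := by
  rw [div_le_iff₀ (by positivity), ← one_le_sq_iff₀ (by positivity)]
  calc 1 = 4 * ρ ^ 2 * x ^ 2 * (1 / (4 * ρ ^ 2) / x ^ 2) := by field_simp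
    _ ≤ 4 * ρ ^ 2 * x ^ 2 * (k ^ 2 / 4 * L) := by gcongr
    _ = (x * (k * ρ * √L)) ^ 2 := by
      simp only [mul_pow, Real.sq_sqrt hL.le]
      ring

theorem stmt5_general {a a' : ℝ → ℝ} {t₀ ρ₁ ρ₂ k : ℝ} (hρ₁ : 0 < ρ₁) (hk : 2 < k)
    (hpos : ∀ t ≥ t₀, 0 < a t)
    (hderiv : ∀ t ≥ t₀, HasDerivAt a (a' t) t)
    (hineq : ∀ t ≥ t₀, a' t ≥ -ρ₂ * Real.exp (-1 / (4 * ρ₁ ^ 2 * (a t) ^ 2))) :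
    ∀ᶠ t in atTop, a t ≥ 1 / (k * ρ₁ * Real.sqrt (Real.log t)) := by
  have h_ineq : ∀ t ≥ t₀, -ρ₂ * Real.exp (-(1 / (4 * ρ₁ ^ 2)) / a t ^ 2) ≤ a' t := fun t ht => by
    rw [← neg_div, div_div]
    exact hineq t ht
  have h_const : 1 < k ^ 2 / 4 := by nlinarith
  filter_upwards [eventually_ge_atTop t₀, eventually_gt_atTop 1,
    eventually_div_sq_le_mul_log (by positivity) h_const hpos hderiv h_ineq] with t ht ht_one h_log
  exact one_div_mul_sqrt_le_of_one_div_sq_le (by linarith) hρ₁ (hpos t ht) (Real.log_pos ht_one)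
    h_log

/-- Logarithmically slow lower bound for the centre-manifold amplitude. -/
theorem stmt5 (a a' : ℝ → ℝ) (t₀ ρ₁ ρ₂ : ℝ) (hρ₁ : 0 < ρ₁) (hρ₂ : 0 < ρ₂)
    (hpos : ∀ t ≥ t₀, 0 < a t)
    (hderiv : ∀ t ≥ t₀, HasDerivAt a (a' t) t)
    (hineq : ∀ t ≥ t₀, a' t ≥ -ρ₂ * Real.exp (-1 / (4 * ρ₁ ^ 2 * (a t) ^ 2))) :
    ∀ᶠ t in atTop, a t ≥ 1 / (3 * ρ₁ * Real.sqrt (Real.log t)) :=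
  stmt5_general hρ₁ (by norm_num) hpos hderiv hineq
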